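/- Let A be an infinite-dimensional unital simple C*-algebra, and let B ⊆ A be a centrally large subalgebra of A such that B has tracial topological rank zero. Then A belongs to the class WTA𝔽, where 𝔽 is the class of finite-dimensional C*-algebras. That is: for every ε > 0, every finite subset F ⊆ A, and every nonzero positive element a ∈ A, there exist a projection p ∈ A, an element g ∈ A with 0 ≤ g ≤ 1, and a finite-dimensional unital C*-subalgebra D ⊆ A with g ∈ D and 1_D = p such that: (1) (p−g)x and x(p−g) lie within ε of D for all x ∈ F; (2) ‖(p−g)x − x(p−g)‖ < ε for all x ∈ F; (3) 1 − (p − g) is Cuntz subequivalent to a in A; (4) ‖(p−g)a(p−g)‖ ≥ ‖a‖ − ε. -/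

import Mathlib

open Filter

/-- `a` is Cuntz subequivalent to `b` in the C*-algebra `A`: there is a sequence
`(rₙ)` in `A` with `‖rₙ * b * rₙ* - a‖ → 0`. -/
def CuntzSubeq {A : Type*} [NonUnitalCStarAlgebra A] (a b : A) : Prop :=
  ∃ r : ℕ → A,
    Tendsto (fun n => ‖r n * b * star (r n) - a‖) atTop (nhds 0)

/-- `a` is Cuntz subequivalent to `b` relative to the subset `S` of `A`: there
is a sequence `(rₙ)` in `S` with `‖rₙ * b * rₙ* - a‖ → 0`. -/
def CuntzSubeqIn {A : Type*} [NonUnitalCStarAlgebra A] (S : Set A) (a b : A) : Prop :=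
  ∃ r : ℕ → A, (∀ n, r n ∈ S) ∧
    Tendsto (fun n => ‖r n * b * star (r n) - a‖) atTop (nhds 0)

/-- A projection in a C*-algebra: a self-adjoint idempotent. -/
def IsProjection {A : Type*} [NonUnitalCStarAlgebra A] (p : A) : Prop :=
  p = star p ∧ p = p * p

/-- A C*-algebra is simple if it has no closed two-sided ideals other than
`⊥` and `⊤`. -/
def IsSimpleCStarAlgebra (A : Type*) [NonUnitalCStarAlgebra A] : Prop :=
  ∀ I : TwoSidedIdeal A, IsClosed (I : Set A) → I = ⊥ ∨ I = ⊤

/-- The unital subalgebra `B` is centrally large in `A` (Archey–Phillips). -/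
def IsCentrallyLarge {A : Type*} [CStarAlgebra A] [PartialOrder A]
    [StarOrderedRing A] (B : StarSubalgebra ℂ A) : Prop :=
  ∀ (m : ℕ) (a : Fin m → A) (ε : ℝ), 0 < ε →
    ∀ x : A, 0 ≤ x → ‖x‖ = 1 → ∀ y ∈ B, 0 ≤ y → y ≠ 0 →
    ∃ c : Fin m → A, ∃ g ∈ B,
      0 ≤ g ∧ g ≤ 1 ∧
      (∀ j, ‖c j - a j‖ < ε) ∧
      (∀ j, (1 - g) * c j ∈ B) ∧
      CuntzSubeqIn (B : Set A) g y ∧ CuntzSubeq g x ∧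
      ‖(1 - g) * x * (1 - g)‖ > 1 - ε ∧
      (∀ j, ‖g * a j - a j * g‖ < ε)

/-- The closed unital subalgebra `B` of `A` has tracial topological rank zero
(Lin), all data being taken inside `B`. -/
def TracialTopRankZeroIn {A : Type*} [CStarAlgebra A] [PartialOrder A]
    [StarOrderedRing A] (B : StarSubalgebra ℂ A) : Prop :=
  ∀ (ε : ℝ), 0 < ε → ∀ G : Finset A, (↑G : Set A) ⊆ (B : Set A) →
    ∀ a ∈ B, 0 ≤ a → a ≠ 0 →
    ∃ p ∈ B, IsProjection p ∧ p ≠ 0 ∧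
    ∃ E : NonUnitalStarSubalgebra ℂ A, (E : Set A) ⊆ (B : Set A) ∧
      FiniteDimensional ℂ E ∧ p ∈ E ∧
      (∀ z ∈ E, p * z = z ∧ z * p = z) ∧
      (∀ x ∈ G, ‖p * x - x * p‖ < ε) ∧
      (∀ x ∈ G, ∃ d ∈ E, ‖p * x * p - d‖ < ε) ∧
      CuntzSubeqIn (B : Set A) (1 - p) a


section CzHelpers
variable {A : Type*} [CStarAlgebra A]

def Cz (a b : A) : Prop := ∀ ε : ℝ, 0 < ε → ∃ r : A, ‖r * b * star r - a‖ < ε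

theorem cz_iff {a b : A} : CuntzSubeq a b ↔ Cz a b := by
  constructor
  · rintro ⟨r, hr⟩ ε hε
    obtain ⟨n, hn⟩ := (hr.eventually (gt_mem_nhds hε)).exists
    exact ⟨r n, hn⟩
  · intro h
    choose r hr using fun n : ℕ => h (1 / ((n : ℝ) + 1)) (by positivity)
    refine ⟨r, squeeze_zero (fun _ => norm_nonneg _) (fun n => (hr n).le) ?_⟩
    exact tendsto_one_div_add_atTop_nhds_zero_nat

theorem czIn {S : Set A} {a b : A} (h : CuntzSubeqIn S a b) :
    ∀ ε : ℝ, 0 < ε → ∃ r ∈ S, ‖r * b * star r - a‖ < ε := by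
  obtain ⟨r, hS, hr⟩ := h
  intro ε hε
  obtain ⟨n, hn⟩ := (hr.eventually (gt_mem_nhds hε)).exists
  exact ⟨r n, hS n, hn⟩

theorem czIn_cz {S : Set A} {a b : A} (h : CuntzSubeqIn S a b) : Cz a b := by
  intro ε hε
  obtain ⟨r, _, h⟩ := czIn h ε hε
  exact ⟨r, h⟩

theorem cz_conj (r b : A) : Cz (r * b * star r) b := fun ε hε => ⟨r, by simpa using hε⟩

theorem cz_trans {a b c : A} (h1 : Cz a b) (h2 : Cz b c) : Cz a c := by
  intro ε hε
  obtain ⟨r, hr⟩ := h1 (ε/2) (by positivity)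
  obtain ⟨t, ht⟩ := h2 (ε / 2 / (‖r‖ * ‖r‖ + 1)) (by positivity)
  refine ⟨r * t, ?_⟩
  have e : r * t * c * star (r * t) - a
      = r * (t * c * star t - b) * star r + (r * b * star r - a) := by
    rw [star_mul]; noncomm_ring
  rw [e]
  have h3 : ‖r * (t * c * star t - b) * star r‖ ≤ ε / 2 := by
    calc _ ≤ ‖r‖ * ‖t * c * star t - b‖ * ‖star r‖ := norm_mul₃_le
      _ = (‖r‖ * ‖r‖) * ‖t * c * star t - b‖ := by rw [norm_star]; ring
      _ ≤ (‖r‖ * ‖r‖ + 1) * (ε / 2 / (‖r‖ * ‖r‖ + 1)) := by gcongr; linarith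
      _ = ε / 2 := by field_simp
  linarith [norm_add_le (r * (t * c * star t - b) * star r) (r * b * star r - a)]

theorem cz_approx {a b : A} (h : ∀ η : ℝ, 0 < η → ∃ a', ‖a' - a‖ ≤ η ∧ Cz a' b) : Cz a b := by
  intro ε hε
  obtain ⟨a', h1, h2⟩ := h (ε/2) (by positivity)
  obtain ⟨r, hr⟩ := h2 (ε/2) (by positivity)
  refine ⟨r, ?_⟩
  have := norm_add_le (r * b * star r - a') (a' - a)
  rw [sub_add_sub_cancel] at this
  linarith

theorem cz_smul {b : A} {t : ℝ} (ht : 0 ≤ t) : Cz (t • b) b := by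
  have : t • b = (Real.sqrt t • (1:A)) * b * star (Real.sqrt t • (1:A)) := by
    simp [smul_smul, Real.mul_self_sqrt ht]
  rw [this]; exact cz_conj _ _

variable [PartialOrder A] [StarOrderedRing A]

theorem cz_of_le {x y : A} (hx : 0 ≤ x) (hxy : x ≤ y) : Cz x y := by
  have hy : 0 ≤ y := hx.trans hxy
  have hysa : IsSelfAdjoint y := .of_nonneg hy
  intro ε hε
  set η := ε / 2 with hη
  have hη0 : 0 < η := by positivity
  set s := CFC.sqrt x with hs
  have hs0 : 0 ≤ s := CFC.sqrt_nonneg x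
  have hss : s * s = x := CFC.sqrt_mul_sqrt_self x hx
  have hssa : star s = s := (IsSelfAdjoint.of_nonneg hs0).star_eq
  have hsp : ∀ t ∈ spectrum ℝ y, 0 ≤ t := fun t ht => spectrum_nonneg_of_nonneg hy ht
  let fk : ℝ → ℝ := fun t => Real.sqrt (1 / (|t| + η))
  let fu : ℝ → ℝ := fun t => Real.sqrt (η / (|t| + η))
  have cpos : ∀ t : ℝ, |t| + η ≠ 0 := fun t => by positivity
  have hfk : Continuous fk := by
    refine Real.continuous_sqrt.comp (Continuous.div (by fun_prop) (by fun_prop) cpos)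
  have hfu : Continuous fu := by
    refine Real.continuous_sqrt.comp (Continuous.div (by fun_prop) (by fun_prop) cpos)
  set k := cfc fk y with hk
  set u := cfc fu y with hu
  have hksa : star k = k := (cfc_predicate fk y : IsSelfAdjoint _).star_eq
  have husa : star u = u := (cfc_predicate fu y : IsSelfAdjoint _).star_eq
  have hid : cfc (fun t : ℝ => t) y = y := cfc_id' ℝ y
  have hkyk : k * y * k = 1 - u * u := by
    have h1 : k * y * k = cfc (fun t => fk t * t * fk t) y := by
      rw [cfc_mul _ _ _ (by fun_prop) (by fun_prop), cfc_mul _ _ _ (by fun_prop) (by fun_prop), hid]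
    have h2 : 1 - u * u = cfc (fun t => 1 - fu t * fu t) y := by
      rw [cfc_sub _ _ _ (by fun_prop) (by fun_prop), cfc_mul _ _ _ (by fun_prop) (by fun_prop),
        cfc_const_one ℝ y]
    rw [h1, h2]
    refine cfc_congr fun t ht => ?_
    have h0 := hsp t ht
    have e1 : fk t * fk t = 1 / (t + η) := by
      simp only [fk, abs_of_nonneg h0]; exact Real.mul_self_sqrt (by positivity)
    have e2 : fu t * fu t = η / (t + η) := by
      simp only [fu, abs_of_nonneg h0]; exact Real.mul_self_sqrt (by positivity)
    show fk t * t * fk t = 1 - fu t * fu t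
    rw [e2, mul_right_comm, e1]
    field_simp
    ring
  refine ⟨s * k, ?_⟩
  have e : s * k * y * star (s * k) - x = - ((s * u) * star (s * u)) := by
    rw [star_mul, star_mul, hksa, husa, hssa]
    have : s * k * y * (k * s) = s * (k * y * k) * s := by noncomm_ring
    rw [this, hkyk, ← hss]; noncomm_ring
  rw [e, norm_neg, CStarRing.norm_self_mul_star, ← CStarRing.norm_star_mul_self, star_mul, husa, hssa]
  have e2 : u * s * (s * u) = u * x * u := by rw [← hss]; noncomm_ring
  rw [e2]
  have h1 : u * x * u ≤ u * y * u := by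
    have := star_left_conjugate_le_conjugate hxy u
    rwa [husa] at this
  have h0 : 0 ≤ u * x * u := by
    have := star_left_conjugate_nonneg hx u
    rwa [husa] at this
  have h2 : ‖u * y * u‖ ≤ η := by
    have h1 : u * y * u = cfc (fun t => fu t * t * fu t) y := by
      rw [cfc_mul _ _ _ (by fun_prop) (by fun_prop), cfc_mul _ _ _ (by fun_prop) (by fun_prop), hid]
    rw [h1]
    refine norm_cfc_le hη0.le fun t ht => ?_
    have h0 := hsp t ht
    have e2 : fu t * fu t = η / (t + η) := by
      simp only [fu, abs_of_nonneg h0]; exact Real.mul_self_sqrt (by positivity)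
    rw [mul_right_comm, e2, Real.norm_of_nonneg (by positivity), div_mul_eq_mul_div,
      div_le_iff₀ (by positivity)]
    nlinarith
  have := CStarAlgebra.norm_le_norm_of_nonneg_of_le h0 h1
  linarith

/-- Rordam type lemma. -/
theorem cz_cut {h b : A} (hh : IsSelfAdjoint h) {δ : ℝ} (hb : h ≤ b + algebraMap ℝ A δ) :
    Cz (cfc (fun t : ℝ => max (t - δ) 0) h) b := by
  refine cz_approx fun η hη => ?_
  let f : ℝ → ℝ := fun t => min 1 (max (t - δ) 0 / η)
  have hf : Continuous f := by fun_prop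
  set k := cfc f h with hk
  have hksa : star k = k := (cfc_predicate f h : IsSelfAdjoint _).star_eq
  have hid : cfc (fun t : ℝ => t) h = h := cfc_id' ℝ h
  have h1 : k * (h - algebraMap ℝ A δ) * k = cfc (fun t => f t * (t - δ) * f t) h := by
    rw [cfc_mul _ _ _ (by fun_prop) (by fun_prop), cfc_mul _ _ _ (by fun_prop) (by fun_prop),
      cfc_sub _ _ _ (by fun_prop) (by fun_prop), hid, cfc_const δ h]
  refine ⟨k * (h - algebraMap ℝ A δ) * k, ?_, ?_⟩
  · rw [h1, ← cfc_sub _ _ _ (by fun_prop) (by fun_prop)]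
    refine norm_cfc_le hη.le fun t _ => ?_
    simp only [f]
    rcases le_total (t - δ) 0 with h | h
    · simp [max_eq_right h, hη.le]
    · rw [max_eq_left h]
      rcases le_total 1 ((t - δ)/η) with h' | h'
      · simp [min_eq_left h', hη.le]
      · rw [min_eq_right h']
        have h3 : 0 ≤ (t - δ)/η := by positivity
        have h4 : t - δ ≤ η := by rwa [div_le_one hη] at h'
        rw [Real.norm_eq_abs, abs_le]
        constructor <;> nlinarith [mul_nonneg h3 h, mul_nonneg (mul_nonneg h3 h) h3, mul_nonneg h3 h3]
  · have h2 : k * (h - algebraMap ℝ A δ) * k ≤ k * b * star k := by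
      have := star_left_conjugate_le_conjugate (sub_le_iff_le_add.mpr hb) k
      rw [hksa] at this
      rwa [hksa]
    refine cz_trans (cz_of_le ?_ h2) (cz_conj _ _)
    rw [h1]
    refine cfc_nonneg fun t _ => ?_
    simp only [f]
    rcases le_total (t - δ) 0 with h | h
    · simp [max_eq_right h]
    · rw [max_eq_left h]; positivity

theorem exists_local_unit {b : A} (hb : 0 ≤ b) {η : ℝ} (hη : 0 < η) :
    ∃ l : A, star l = l ∧ (∃ z, l = z * b) ∧ (∃ z, l = b * z) ∧ ‖l * b * l - b‖ ≤ η := by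
  let f : ℝ → ℝ := fun t => 1 / (|t| + η/2)
  have cpos : ∀ t : ℝ, |t| + η/2 ≠ 0 := fun t => by positivity
  have hf : Continuous f := Continuous.div (by fun_prop) (by fun_prop) cpos
  have hid : cfc (fun t : ℝ => t) b = b := cfc_id' ℝ b
  have hsp : ∀ t ∈ spectrum ℝ b, 0 ≤ t := fun t ht => spectrum_nonneg_of_nonneg hb ht
  have h1 : cfc (fun t => f t * t) b = cfc f b * b := by
    rw [cfc_mul _ _ _ (by fun_prop) (by fun_prop), hid]
  have h2 : cfc (fun t => f t * t) b = b * cfc f b := by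
    simp_rw [mul_comm (f _)]
    rw [cfc_mul _ _ _ (by fun_prop) (by fun_prop), hid]
  refine ⟨cfc (fun t => f t * t) b, (cfc_predicate _ b : IsSelfAdjoint _).star_eq, ⟨_, h1⟩, ⟨_, h2⟩, ?_⟩
  have h3 : cfc (fun t => f t * t) b * b * cfc (fun t => f t * t) b - b =
      cfc (fun t => (f t * t) * t * (f t * t) - t) b := by
    rw [cfc_sub _ _ _ (by fun_prop) (by fun_prop), cfc_mul (fun t => f t * t * t) (fun t => f t * t) _ (by fun_prop) (by fun_prop),
      cfc_mul (fun t => f t * t) (fun t => t) b (by fun_prop) (by fun_prop), hid]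
  rw [h3]
  refine norm_cfc_le hη.le fun t ht => ?_
  have h0 := hsp t ht
  simp only [f, abs_of_nonneg h0]
  have hp : 0 < t + η/2 := by positivity
  have : 1 / (t + η / 2) * t * t * (1 / (t + η / 2) * t) - t
      = - (t * (η * t + η^2/4) / (t + η/2)^2) := by
    field_simp
    ring
  rw [this, norm_neg, Real.norm_of_nonneg (by positivity), div_le_iff₀ (by positivity)]
  nlinarith [mul_nonneg h0 hη.le, mul_pos hη hη, mul_nonneg h0 (mul_pos hη hη).le, mul_pos (mul_pos hη hη) hη]

theorem cz_add {a₁ a₂ b₁ b₂ : A} (h1 : Cz a₁ b₁) (h2 : Cz a₂ b₂) (hb1 : 0 ≤ b₁) (hb2 : 0 ≤ b₂)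
    (hb : b₁ * b₂ = 0) : Cz (a₁ + a₂) (b₁ + b₂) := by
  have hb' : b₂ * b₁ = 0 := by
    have := congrArg star hb
    rwa [star_mul, star_zero, (IsSelfAdjoint.of_nonneg hb1).star_eq,
      (IsSelfAdjoint.of_nonneg hb2).star_eq] at this
  have key : ∀ {a b : A}, Cz a b → 0 ≤ b → ∀ ε : ℝ, 0 < ε → ∃ r l z z' : A,
      star l = l ∧ l = z * b ∧ l = b * z' ∧ ‖r * l * b * l * star r - a‖ < ε := by
    intro a b h hb ε hε
    obtain ⟨r, hr⟩ := h (ε/2) (by positivity)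
    obtain ⟨l, hl, ⟨z, hz⟩, ⟨z', hz'⟩, hn⟩ :=
      exists_local_unit hb (η := ε / 2 / (‖r‖ * ‖r‖ + 1)) (by positivity)
    refine ⟨r, l, z, z', hl, hz, hz', ?_⟩
    have e : r * l * b * l * star r - a = r * (l * b * l - b) * star r + (r * b * star r - a) := by
      noncomm_ring
    have h3 : ‖r * (l * b * l - b) * star r‖ ≤ ε / 2 := by
      calc _ ≤ ‖r‖ * ‖l * b * l - b‖ * ‖star r‖ := norm_mul₃_le
        _ = (‖r‖ * ‖r‖) * ‖l * b * l - b‖ := by rw [norm_star]; ring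
        _ ≤ (‖r‖ * ‖r‖ + 1) * (ε / 2 / (‖r‖ * ‖r‖ + 1)) := by gcongr; linarith
        _ = ε / 2 := by field_simp
    rw [e]
    linarith [norm_add_le (r * (l * b * l - b) * star r) (r * b * star r - a)]
  intro ε hε
  obtain ⟨r₁, l₁, z₁, w₁, hl₁, hz₁, hw₁, hn₁⟩ := key h1 hb1 (ε/2) (by positivity)
  obtain ⟨r₂, l₂, z₂, w₂, hl₂, hz₂, hw₂, hn₂⟩ := key h2 hb2 (ε/2) (by positivity)
  have o1 : l₁ * b₂ = 0 := by rw [hz₁, mul_assoc, hb, mul_zero]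
  have o2 : l₂ * b₁ = 0 := by rw [hz₂, mul_assoc, hb', mul_zero]
  have o3 : b₁ * l₂ = 0 := by rw [hw₂, ← mul_assoc, hb, zero_mul]
  have o4 : b₂ * l₁ = 0 := by rw [hw₁, ← mul_assoc, hb', zero_mul]
  refine ⟨r₁ * l₁ + r₂ * l₂, ?_⟩
  have e : (r₁ * l₁ + r₂ * l₂) * (b₁ + b₂) * star (r₁ * l₁ + r₂ * l₂) - (a₁ + a₂)
      = (r₁ * l₁ * b₁ * l₁ * star r₁ - a₁) + (r₂ * l₂ * b₂ * l₂ * star r₂ - a₂) := by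
    have e1 : (r₁ * l₁ + r₂ * l₂) * (b₁ + b₂) = r₁ * l₁ * b₁ + r₂ * l₂ * b₂ := by
      have : (r₁ * l₁ + r₂ * l₂) * (b₁ + b₂) = r₁ * l₁ * b₁ + r₂ * l₂ * b₂
        + r₁ * (l₁ * b₂) + r₂ * (l₂ * b₁) := by noncomm_ring
      rw [this, o1, o2]; simp
    rw [e1, star_add, star_mul, star_mul, hl₁, hl₂]
    have : (r₁ * l₁ * b₁ + r₂ * l₂ * b₂) * (l₁ * star r₁ + l₂ * star r₂) =
      r₁ * l₁ * b₁ * l₁ * star r₁ + r₂ * l₂ * b₂ * l₂ * star r₂ +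
      r₁ * l₁ * (b₁ * l₂) * star r₂ + r₂ * l₂ * (b₂ * l₁) * star r₁ := by noncomm_ring
    rw [this, o3, o4]; simp; abel
  rw [e]
  linarith [norm_add_le (r₁ * l₁ * b₁ * l₁ * star r₁ - a₁) (r₂ * l₂ * b₂ * l₂ * star r₂ - a₂)]

end CzHelpers

section SimpleHelpers
variable {A : Type*} [CStarAlgebra A]

def sandwich (b : A) : Set A := {z | ∃ x y, z = x * b * y}

theorem sandwich_mul_left (b c : A) {z : A} (hz : z ∈ Submodule.span ℂ (sandwich b)) :
    c * z ∈ Submodule.span ℂ (sandwich b) := by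
  induction hz using Submodule.span_induction with
  | mem z h =>
    obtain ⟨x, y, rfl⟩ := h
    exact Submodule.subset_span ⟨c * x, y, by noncomm_ring⟩
  | zero => simp
  | add x y _ _ hx hy => rw [mul_add]; exact add_mem hx hy
  | smul t x _ hx => rw [mul_smul_comm]; exact Submodule.smul_mem _ _ hx

theorem sandwich_mul_right (b c : A) {z : A} (hz : z ∈ Submodule.span ℂ (sandwich b)) :
    z * c ∈ Submodule.span ℂ (sandwich b) := by
  induction hz using Submodule.span_induction with
  | mem z h =>
    obtain ⟨x, y, rfl⟩ := h
    exact Submodule.subset_span ⟨x, y * c, by noncomm_ring⟩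
  | zero => simp
  | add x y _ _ hx hy => rw [add_mul]; exact add_mem hx hy
  | smul t x _ hx => rw [smul_mul_assoc]; exact Submodule.smul_mem _ _ hx

theorem exists_span_near_one (hs : IsSimpleCStarAlgebra A) {b : A} (hb : b ≠ 0) :
    ∃ z ∈ Submodule.span ℂ (sandwich b), ‖z - 1‖ < 1 / 2 := by
  set V := (Submodule.span ℂ (sandwich b)) with hV
  let I : TwoSidedIdeal A := TwoSidedIdeal.mk' (V.topologicalClosure : Set A)
    (zero_mem _) (fun h1 h2 => add_mem h1 h2) (fun h => neg_mem h)
    (fun {x y} h => by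
      have : Set.MapsTo (fun z => x * z) (V : Set A) (V : Set A) :=
        fun z hz => sandwich_mul_left b x hz
      exact this.closure (by fun_prop) h)
    (fun {x y} h => by
      have : Set.MapsTo (fun z => z * y) (V : Set A) (V : Set A) :=
        fun z hz => sandwich_mul_right b y hz
      exact this.closure (by fun_prop) h)
  have hI : ∀ x, x ∈ I ↔ x ∈ V.topologicalClosure := fun x => TwoSidedIdeal.mem_mk' _ _ _ _ _ _ _
  have hbI : b ∈ I := by
    rw [hI]
    exact subset_closure (Submodule.subset_span ⟨1, 1, by simp⟩)
  have hcl : IsClosed (I : Set A) := by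
    have : (I : Set A) = V.topologicalClosure := TwoSidedIdeal.coe_mk' _ _ _ _ _ _
    rw [this]; exact V.isClosed_topologicalClosure
  rcases hs I hcl with h | h
  · rw [h, TwoSidedIdeal.mem_bot] at hbI
    exact absurd hbI hb
  · have h1 : (1 : A) ∈ I := by rw [h]; trivial
    rw [hI] at h1
    obtain ⟨z, hz, h2⟩ := Metric.mem_closure_iff.mp h1 (1/2) (by norm_num)
    exact ⟨z, hz, by rwa [dist_comm, dist_eq_norm] at h2⟩

theorem one_mem_span (hs : IsSimpleCStarAlgebra A) {b : A} (hb : b ≠ 0) :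
    (1 : A) ∈ Submodule.span ℂ (sandwich b) := by
  obtain ⟨z, hz, h⟩ := exists_span_near_one hs hb
  have hu : IsUnit z := by
    have : IsUnit (1 - (1 - z)) := isUnit_one_sub_of_norm_lt_one (by
      rw [norm_sub_rev]; linarith)
    simpa using this
  obtain ⟨u, rfl⟩ := hu
  have := sandwich_mul_left b (↑u⁻¹ : A) hz
  simpa using this

theorem finiteDimensional_of_corner (hs : IsSimpleCStarAlgebra A) {q : A} (hq : q ≠ 0)
    (hc : ∀ x : A, ∃ c : ℂ, q * x * q = c • q) : FiniteDimensional ℂ A := by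
  obtain ⟨T, hTS, hT⟩ := Submodule.mem_span_finite_of_mem_span (one_mem_span hs hq)
  have hex : ∀ t : A, ∃ x y : A, t ∈ T → t = x * q * y := by
    intro t
    by_cases ht : t ∈ T
    · obtain ⟨x, y, h⟩ := hTS ht
      exact ⟨x, y, fun _ => h⟩
    · exact ⟨0, 0, fun h => absurd h ht⟩
  choose X Y hXY using hex
  let S : Set A := Set.image2 (fun t t' => X t * q * Y t') (T : Set A) (T : Set A)
  have hSf : S.Finite := T.finite_toSet.image2 _ T.finite_toSet
  have key : ∀ a u v : A, u ∈ Submodule.span ℂ (T : Set A) → v ∈ Submodule.span ℂ (T : Set A) →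
      u * a * v ∈ Submodule.span ℂ S := by
    intro a u v hu hv
    induction hu using Submodule.span_induction with
    | mem u h =>
      induction hv using Submodule.span_induction with
      | mem v h' =>
        obtain ⟨c, hc⟩ := hc (Y u * a * X v)
        have : u * a * v = c • (X u * q * Y v) := by
          calc u * a * v = (X u * q * Y u) * a * (X v * q * Y v) := by
                rw [← hXY u h, ← hXY v h']
            _ = X u * (q * (Y u * a * X v) * q) * Y v := by noncomm_ring
            _ = _ := by rw [hc]; simp
        rw [this]
        exact Submodule.smul_mem _ _ (Submodule.subset_span ⟨u, h, v, h', rfl⟩)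
      | zero => simp
      | add x y _ _ hx hy => rw [mul_add]; exact add_mem hx hy
      | smul t x _ hx => rw [mul_smul_comm]; exact Submodule.smul_mem _ _ hx
    | zero => simp
    | add x y _ _ hx hy => rw [add_mul, add_mul]; exact add_mem hx hy
    | smul t x _ hx => rw [smul_mul_assoc, smul_mul_assoc]; exact Submodule.smul_mem _ _ hx
  have htop : Submodule.span ℂ S = ⊤ := by
    rw [eq_top_iff]
    intro a _
    have := key a 1 1 hT hT
    simpa using this
  exact Module.finite_def.mpr (htop ▸ Submodule.fg_span hSf)

variable [PartialOrder A] [StarOrderedRing A]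

theorem abs_le_of_norm {x : A} (hx : IsSelfAdjoint x) {r : ℝ} (h : ‖x‖ ≤ r) :
    x ≤ algebraMap ℝ A r ∧ - algebraMap ℝ A r ≤ x := by
  have h1 : algebraMap ℝ A ‖x‖ ≤ algebraMap ℝ A r := algebraMap_mono A h
  exact ⟨(IsSelfAdjoint.le_algebraMap_norm_self hx).trans h1,
    (neg_le_neg h1).trans (IsSelfAdjoint.neg_algebraMap_norm_le_self hx)⟩

theorem sum_conj_ge (b : A) (hb : 0 ≤ b) {z : A} (hz : z ∈ Submodule.span ℂ (sandwich b)) :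
    ∀ c : ℂ, ∃ L : List A, c • z + star (c • z) ≤ (L.map (fun x => x * b * star x)).sum := by
  induction hz using Submodule.span_induction with
  | mem z h =>
    obtain ⟨x, y, rfl⟩ := h
    intro c
    refine ⟨[c • x, star y], ?_⟩
    have hbs : star b = b := (IsSelfAdjoint.of_nonneg hb).star_eq
    have := star_right_conjugate_nonneg hb (c • x - star y)
    rw [← sub_nonneg]
    convert this using 1
    simp only [star_sub, star_star, star_mul, star_smul, hbs, List.map_cons, List.map_nil,
      List.sum_cons, List.sum_nil, sub_mul, mul_sub, smul_mul_assoc, mul_smul_comm, mul_assoc, smul_sub]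
    abel
  | zero => intro c; exact ⟨[], by simp⟩
  | add x y _ _ hx hy =>
    intro c
    obtain ⟨L, hL⟩ := hx c
    obtain ⟨L', hL'⟩ := hy c
    refine ⟨L ++ L', ?_⟩
    rw [List.map_append, List.sum_append]
    refine le_trans (le_of_eq ?_) (add_le_add hL hL')
    simp only [smul_add, star_add]; abel
  | smul t x _ hx =>
    intro c
    obtain ⟨L, hL⟩ := hx (c * t)
    exact ⟨L, by rwa [smul_smul]⟩

theorem exists_sum_ge_one (hs : IsSimpleCStarAlgebra A) {b : A} (hb : 0 ≤ b) (hb0 : b ≠ 0) :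
    ∃ (n : ℕ) (x : Fin n → A), 1 ≤ ∑ i, x i * b * star (x i) := by
  obtain ⟨L, hL⟩ := sum_conj_ge b hb (one_mem_span hs hb0) 1
  refine ⟨L.length, L.get, ?_⟩
  have : (L.map (fun x => x * b * star x)).sum = ∑ i : Fin L.length, L.get i * b * star (L.get i) := by
    rw [← Fin.sum_univ_fun_getElem L (fun x => x * b * star x)]
    rfl
  rw [← this]
  refine le_trans ?_ hL
  have h1 : (0:A) ≤ 1 := by
    have := star_mul_self_nonneg (1:A)
    rwa [star_one, one_mul] at this
  rw [one_smul, star_one]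
  exact le_add_of_nonneg_left h1

/-- Two orthogonal pieces. -/
theorem exists_orthogonal (hs : IsSimpleCStarAlgebra A) (hinf : ¬ FiniteDimensional ℂ A)
    {a : A} (ha : 0 ≤ a) (ha0 : a ≠ 0) :
    ∃ a₁ a₂ : A, 0 ≤ a₁ ∧ 0 ≤ a₂ ∧ a₁ ≠ 0 ∧ a₂ ≠ 0 ∧ a₁ * a₂ = 0 ∧ Cz (a₁ + a₂) a := by
  by_contra hcon
  have : Nontrivial A := ⟨a, 0, ha0⟩
  -- every positive element below has one nonzero spectral value
  have key1 : ∀ x : A, 0 ≤ x → Cz x a → ∀ s ∈ spectrum ℝ x, ∀ t ∈ spectrum ℝ x,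
      0 < s → s < t → False := by
    intro x hx hxa s hs' t ht hs0 hst
    apply hcon
    set m := (s + t) / 2 with hm
    have hid : cfc (fun t : ℝ => t) x = x := cfc_id' ℝ x
    have hsp : ∀ t ∈ spectrum ℝ x, 0 ≤ t := fun t ht => spectrum_nonneg_of_nonneg hx ht
    let f1 : ℝ → ℝ := fun t => max (t - m) 0
    let f2 : ℝ → ℝ := fun t => max (min t (m - t)) 0
    have c1 : Continuous f1 := by fun_prop
    have c2 : Continuous f2 := by fun_prop
    refine ⟨cfc f1 x, cfc f2 x, cfc_nonneg fun t _ => le_max_right _ _,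
      cfc_nonneg fun t _ => le_max_right _ _, ?_, ?_, ?_, ?_⟩
    · intro h
      have h1 := norm_apply_le_norm_cfc f1 x ht c1.continuousOn
      rw [h, norm_zero] at h1
      have : f1 t = 0 := norm_le_zero_iff.mp h1
      have h3 : t - m ≤ f1 t := le_max_left _ _
      linarith
    · intro h
      have h1 := norm_apply_le_norm_cfc f2 x hs' c2.continuousOn
      rw [h, norm_zero] at h1
      have : f2 s = 0 := norm_le_zero_iff.mp h1
      have h3 : min s (m - s) ≤ f2 s := le_max_left _ _
      have h4 : 0 < min s (m - s) := lt_min hs0 (by linarith)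
      linarith
    · rw [← cfc_mul _ _ _ c1.continuousOn c2.continuousOn]
      rw [← cfc_const_zero ℝ x]
      refine cfc_congr fun t _ => ?_
      simp only [f1, f2]
      rcases le_total t m with h | h
      · rw [max_eq_right (by linarith), zero_mul]
      · rw [max_eq_right (a := min t (m - t)) ((min_le_right _ _).trans (by linarith)), mul_zero]
    · refine cz_trans (cz_of_le ?_ ?_) hxa
      · exact add_nonneg (cfc_nonneg fun t _ => le_max_right _ _)
          (cfc_nonneg fun t _ => le_max_right _ _)
      · rw [← cfc_add _ _ _ c1.continuousOn c2.continuousOn]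
        conv_rhs => rw [← hid]
        refine cfc_mono (fun t ht => ?_) (by fun_prop) (by fun_prop)
        have h0 := hsp t ht
        simp only [f1, f2]
        rcases le_total t m with h | h
        · rw [max_eq_right (by linarith), zero_add]
          exact max_le (min_le_left _ _) h0
        · rw [max_eq_right (a := min t (m - t)) ((min_le_right _ _).trans (by linarith)), add_zero]
          exact max_le (by linarith) h0
  have key2 : ∀ x : A, 0 ≤ x → Cz x a → x * x = ‖x‖ • x := by
    intro x hx hxa
    have hid : cfc (fun t : ℝ => t) x = x := cfc_id' ℝ x
    have h1 : x * x = cfc (fun t : ℝ => t * t) x := by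
      rw [cfc_mul _ _ _ (by fun_prop) (by fun_prop), hid]
    have h2 : ‖x‖ • x = cfc (fun t : ℝ => ‖x‖ * t) x := by
      rw [cfc_const_mul _ _ _ (by fun_prop), hid]
    rw [h1, h2]
    refine cfc_congr fun t ht => ?_
    have h0 : 0 ≤ t := spectrum_nonneg_of_nonneg hx ht
    have hn : ‖x‖ ∈ spectrum ℝ x := CStarAlgebra.norm_mem_spectrum_of_nonneg hx
    have hle : t ≤ ‖x‖ := by
      have := IsometricContinuousFunctionalCalculus.norm_spectrum_le (𝕜 := ℝ) x ht
      rwa [Real.norm_of_nonneg h0] at this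
    show t * t = ‖x‖ * t
    rcases h0.eq_or_lt with h | h
    · rw [← h]; simp
    · rcases hle.eq_or_lt with h' | h'
      · rw [← h']
      · exact (key1 x hx hxa t ht _ hn h h').elim
  have hna : 0 < ‖a‖ := norm_pos_iff.mpr ha0
  set q := ‖a‖⁻¹ • a with hq
  have hq0 : 0 ≤ q := smul_nonneg (by positivity) ha
  have hqa : Cz q a := cz_smul (by positivity)
  have hqq : q * q = q := by
    rw [hq, smul_mul_smul_comm, key2 a ha (by simpa using cz_smul (b := a) zero_le_one), smul_smul]
    congr 1; field_simp
  have hqne : q ≠ 0 := smul_ne_zero (by positivity) ha0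
  have hqsa : star q = q := (IsSelfAdjoint.of_nonneg hq0).star_eq
  clear_value q
  apply hinf
  have hsa : ∀ x : A, IsSelfAdjoint x → ∃ c : ℂ, q * x * q = c • q := by
    intro x hx
    set t := ‖x‖ + 1 with ht
    set z := q * x * q + t • q with hz
    obtain ⟨hx1, hx2⟩ := abs_le_of_norm hx le_rfl
    have hb1 : q * x * q ≤ ‖x‖ • q := by
      have := star_left_conjugate_le_conjugate hx1 q
      rw [hqsa] at this
      refine this.trans (le_of_eq ?_)
      rw [Algebra.algebraMap_eq_smul_one, mul_smul_comm, smul_mul_assoc, mul_one, hqq]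
    have hb2 : - (‖x‖ • q) ≤ q * x * q := by
      have := star_left_conjugate_le_conjugate hx2 q
      rw [hqsa] at this
      refine (le_of_eq ?_).trans this
      rw [Algebra.algebraMap_eq_smul_one, mul_neg, neg_mul, mul_smul_comm, smul_mul_assoc, mul_one, hqq]
    have hzq : q ≤ z := by
      rw [hz, ht, add_smul, one_smul]
      have := add_le_add_left hb2 (‖x‖ • q + q)
      simpa using this
    have hz0 : 0 ≤ z := hq0.trans hzq
    have hzC : Cz z q := by
      have h1 : z ≤ (‖x‖ + t) • q := by
        rw [hz, add_smul ‖x‖ t]; exact add_le_add hb1 le_rfl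
      exact cz_trans (cz_of_le hz0 h1) (cz_smul (by positivity))
    have hzz := key2 z hz0 (cz_trans hzC hqa)
    set μ := ‖z‖
    have hqz : q * z = z := by
      rw [hz, mul_add, mul_smul_comm t q q, hqq, ← mul_assoc, ← mul_assoc, hqq]
    have hzqr : z * q = z := by
      rw [hz, add_mul, smul_mul_assoc, hqq, mul_assoc, hqq]
    have hzsa : star z = z := (IsSelfAdjoint.of_nonneg hz0).star_eq
    set d := z - μ • q with hd
    have hdsa : star d = d := by
      rw [hd, star_sub, star_smul, hzsa, hqsa]; simp
    have hzd : z * d = 0 := by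
      rw [hd, mul_sub, mul_smul_comm, hzqr, hzz, sub_self]
    have hqd : q * d = d := by
      rw [hd, mul_sub, mul_smul_comm, hqz, hqq]
    have h1 := star_left_conjugate_le_conjugate hzq d
    rw [mul_assoc, mul_assoc, hzd, mul_zero, hqd] at h1
    have h2 : star d * d = 0 := le_antisymm h1 (star_mul_self_nonneg d)
    have h3 : d = 0 := CStarRing.star_mul_self_eq_zero_iff d |>.mp h2
    refine ⟨((μ - t : ℝ) : ℂ), ?_⟩
    have h4 : z = μ • q := sub_eq_zero.mp h3
    have h5 : q * x * q = (μ - t) • q := by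
      rw [sub_smul, ← h4, hz]; abel
    rw [h5, Complex.coe_smul]
  refine finiteDimensional_of_corner hs hqne fun x => ?_
  obtain ⟨c, hc⟩ := hsa (realPart x : A) (realPart x).2
  obtain ⟨c', hc'⟩ := hsa (imaginaryPart x : A) (imaginaryPart x).2
  refine ⟨c + Complex.I * c', ?_⟩
  conv_lhs => rw [← realPart_add_I_smul_imaginaryPart x]
  rw [mul_add, add_mul, hc, mul_smul_comm, smul_mul_assoc, hc', smul_smul, add_smul]

end SimpleHelpers

set_option linter.unusedSectionVars false

section LargeHelpers
variable {A : Type*} [CStarAlgebra A] [PartialOrder A] [StarOrderedRing A]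

theorem near_ge {x y : A} (hx : IsSelfAdjoint x) (hy : IsSelfAdjoint y) {r : ℝ}
    (h : ‖x - y‖ ≤ r) : y - algebraMap ℝ A r ≤ x := by
  have := (abs_le_of_norm (hx.sub hy) h).2
  rw [sub_le_iff_le_add, ← sub_le_iff_le_add']
  rw [neg_le, neg_sub] at this
  exact this

theorem norm_proj_le {p : A} (hp : IsProjection p) : ‖p‖ ≤ 1 := by
  have h := CStarRing.norm_star_mul_self (x := p)
  rw [← hp.1, ← hp.2] at h
  nlinarith [norm_nonneg p]

theorem norm_proj_eq {p : A} (hp : IsProjection p) (h0 : p ≠ 0) : ‖p‖ = 1 := by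
  have h := CStarRing.norm_star_mul_self (x := p)
  rw [← hp.1, ← hp.2] at h
  have : 0 < ‖p‖ := norm_pos_iff.mpr h0
  nlinarith

theorem norm_one_sub_le {g : A} (h0 : 0 ≤ g) (h1 : g ≤ 1) : ‖1 - g‖ ≤ 1 := by
  rw [CStarAlgebra.norm_le_one_iff_of_nonneg _ (sub_nonneg.mpr h1)]
  exact sub_le_self _ h0

theorem norm_mul_le_of_le_one_left {x y : A} (hx : ‖x‖ ≤ 1) : ‖x * y‖ ≤ ‖y‖ :=
  (norm_mul_le _ _).trans (mul_le_of_le_one_left (norm_nonneg _) hx)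

theorem norm_mul_le_of_le_one_right {x y : A} (hx : ‖x‖ ≤ 1) : ‖y * x‖ ≤ ‖y‖ :=
  (norm_mul_le _ _).trans (mul_le_of_le_one_right (norm_nonneg _) hx)

theorem sq_close {k c s : A} (hk : ‖k‖ ≤ 1) (hs : ‖s‖ ≤ 1) {δ : ℝ} (hδ1 : δ ≤ 1)
    (hc : ‖c - s‖ ≤ δ) : ‖k * c * star c * k - k * (s * star s) * k‖ ≤ 3 * δ := by
  have e : k * c * star c * k - k * (s * star s) * k
    = k * (((c - s) * star c + s * star (c - s))) * k := by rw [star_sub]; noncomm_ring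
  have hc2 : ‖star c‖ ≤ 2 := by
    rw [norm_star]
    have := norm_add_le (c - s) s
    rw [sub_add_cancel] at this
    linarith
  have hδ : 0 ≤ δ := (norm_nonneg _).trans hc
  rw [e]
  refine (norm_mul_le_of_le_one_right hk).trans ((norm_mul_le_of_le_one_left hk).trans ?_)
  refine (norm_add_le _ _).trans ?_
  have h1 : ‖(c - s) * star c‖ ≤ δ * 2 := (norm_mul_le _ _).trans (by gcongr)
  have h2 : ‖s * star (c - s)‖ ≤ δ := by
    refine (norm_mul_le_of_le_one_left hs).trans ?_
    rwa [norm_star]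
  linarith

theorem large_sum (hs : IsSimpleCStarAlgebra A) {B : StarSubalgebra ℂ A}
    (hlarge : IsCentrallyLarge B) {b : A} (hbB : b ∈ B) (hb : 0 ≤ b) (hb0 : b ≠ 0) :
    ∃ (n : ℕ) (r : Fin n → A), (∀ i, r i ∈ B) ∧
      algebraMap ℝ A (1/4) ≤ ∑ i, r i * b * star (r i) := by
  have hnt : Nontrivial A := ⟨b, 0, hb0⟩
  obtain ⟨n, x, hx⟩ := exists_sum_ge_one hs hb hb0
  let Φ : (Fin n → A) → A := fun c => ∑ i, c i * b * star (c i)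
  have hΦ : Continuous Φ := by fun_prop
  have hbsa : IsSelfAdjoint b := .of_nonneg hb
  have hΦsa : ∀ c, IsSelfAdjoint (Φ c) := fun c =>
    .of_nonneg (Finset.sum_nonneg fun i _ => star_right_conjugate_nonneg hb _)
  obtain ⟨δ, hδ, hδ'⟩ := Metric.continuous_iff.mp hΦ x (1/2) (by norm_num)
  obtain ⟨c, g, hgB, hg0, hg1, hc, hcB, hgb, -, -, -⟩ := hlarge n x δ hδ 1 zero_le_one
    CStarRing.norm_one b hbB hb hb0
  have hcx : ‖Φ c - Φ x‖ ≤ 1/2 := by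
    have : dist c x < δ := by
      rw [dist_pi_lt_iff hδ]
      intro j; rw [dist_eq_norm]; exact hc j
    have := hδ' c this
    rw [dist_eq_norm] at this; exact this.le
  have h1 : algebraMap ℝ A (1/2) ≤ Φ c := by
    refine le_trans ?_ (near_ge (hΦsa c) (hΦsa x) hcx)
    rw [le_sub_iff_add_le, ← map_add]
    norm_num
    exact hx
  obtain ⟨r₀, hr₀B, hr₀⟩ := czIn hgb (1/4) (by norm_num)
  have hgsa : IsSelfAdjoint g := .of_nonneg hg0
  have h2 := near_ge (hbsa.conjugate r₀) hgsa hr₀.le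
  refine ⟨n + 1, Fin.cons r₀ (fun i => (1 - g) * c i), ?_, ?_⟩
  · intro i
    refine Fin.cases ?_ (fun i => ?_) i
    · exact hr₀B
    · exact hcB i
  · rw [Fin.sum_univ_succ]
    simp only [Fin.cons_zero, Fin.cons_succ]
    have hksa : star (1 - g) = 1 - g := by rw [star_sub, star_one, hgsa.star_eq]
    have e : ∑ i, (1 - g) * c i * b * star ((1 - g) * c i) = (1 - g) * Φ c * (1 - g) := by
      simp only [Φ, Finset.mul_sum, Finset.sum_mul]
      refine Finset.sum_congr rfl fun i _ => ?_
      rw [star_mul, hksa]; noncomm_ring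
    rw [e]
    have h3 := star_left_conjugate_le_conjugate h1 (1 - g)
    rw [hksa] at h3
    refine le_trans ?_ (add_le_add h2 h3)
    have h4 : (0:A) ≤ (1/2 : ℝ) • (star g * g) := smul_nonneg (by norm_num) (star_mul_self_nonneg g)
    rw [hgsa.star_eq] at h4
    rw [← sub_nonneg]
    convert h4 using 1
    simp only [Algebra.algebraMap_eq_smul_one, sub_mul, mul_sub, mul_one, one_mul, smul_mul_assoc,
      mul_smul_comm, smul_sub]
    module

set_option maxHeartbeats 2000000 in
theorem tr_norm (hs : IsSimpleCStarAlgebra A) {B : StarSubalgebra ℂ A}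
    (hBc : IsClosed (B : Set A)) (hlarge : IsCentrallyLarge B) (hTR : TracialTopRankZeroIn B)
    {ε : ℝ} (hε : 0 < ε) (G : Finset A) (hG : (↑G : Set A) ⊆ (B : Set A))
    {w : A} (hwB : w ∈ B) (hw : 0 ≤ w) {y : A} (hyB : y ∈ B) (hy : 0 ≤ y) (hy0 : y ≠ 0) :
    ∃ p ∈ B, IsProjection p ∧ p ≠ 0 ∧
    ∃ E : NonUnitalStarSubalgebra ℂ A, (E : Set A) ⊆ (B : Set A) ∧
      FiniteDimensional ℂ E ∧ p ∈ E ∧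
      (∀ z ∈ E, p * z = z ∧ z * p = z) ∧
      (∀ x ∈ G, ‖p * x - x * p‖ < ε) ∧
      (∀ x ∈ G, ∃ d ∈ E, ‖p * x * p - d‖ < ε) ∧
      CuntzSubeqIn (B : Set A) (1 - p) y ∧ ‖w‖ - ε ≤ ‖p * w * p‖ := by
  classical
  have hnt : Nontrivial A := ⟨y, 0, hy0⟩
  let f : ℝ → ℝ := fun t => max (t - (‖w‖ - ε/2)) 0
  have hf : Continuous f := by fun_prop
  set v := cfc f w with hv
  have hvB : v ∈ B := cfc_mem (𝕜' := ℂ) (hs := hBc) f hwB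
  have hv0 : 0 ≤ v := cfc_nonneg fun t _ => le_max_right _ _
  have hvsa : star v = v := (IsSelfAdjoint.of_nonneg hv0).star_eq
  have hvne : v ≠ 0 := by
    intro h
    have h1 := norm_apply_le_norm_cfc f w (CStarAlgebra.norm_mem_spectrum_of_nonneg hw) hf.continuousOn
    rw [← hv, h, norm_zero] at h1
    have h2 : f ‖w‖ = 0 := norm_le_zero_iff.mp h1
    have h3 : ‖w‖ - (‖w‖ - ε/2) ≤ f ‖w‖ := le_max_left _ _
    linarith
  have hid : cfc (fun t : ℝ => t) w = w := cfc_id' ℝ w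
  have hvwv : (‖w‖ - ε/2) • (v * v) ≤ v * w * v := by
    have h1 : v * w * v = cfc (fun t => f t * t * f t) w := by
      rw [cfc_mul _ _ _ (by fun_prop) (by fun_prop), cfc_mul _ _ _ (by fun_prop) (by fun_prop), hid]
    have h2 : (‖w‖ - ε/2) • (v * v) = cfc (fun t => (‖w‖ - ε/2) * (f t * f t)) w := by
      rw [cfc_const_mul _ _ _ (by fun_prop), cfc_mul _ _ _ (by fun_prop) (by fun_prop)]
    rw [h1, h2]
    refine cfc_mono (fun t _ => ?_) (by fun_prop) (by fun_prop)
    simp only [f]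
    rcases le_total (t - (‖w‖ - ε/2)) 0 with h | h
    · simp [max_eq_right h]
    · rw [max_eq_left h]
      nlinarith [mul_nonneg h (mul_nonneg h h)]
  clear_value v
  have hbB : v * v ∈ B := mul_mem hvB hvB
  have hb0 : 0 ≤ v * v := by
    have := star_mul_self_nonneg v
    rwa [hvsa] at this
  have hbne : v * v ≠ 0 := by
    intro h
    apply hvne
    rw [← CStarRing.star_mul_self_eq_zero_iff, hvsa, h]
  obtain ⟨n, r, hrB, hr⟩ := large_sum hs hlarge hbB hb0 hbne
  set b := v * v with hb
  set K := ∑ i, ‖r i‖ * ‖r i‖ with hK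
  set M := ∑ i, ‖r i‖ with hM
  have hK0 : 0 ≤ K := Finset.sum_nonneg fun i _ => by positivity
  have hM0 : 0 ≤ M := Finset.sum_nonneg fun i _ => by positivity
  set κ := 1 / (8 * (K + 1)) with hκ
  have hκ0 : 0 < κ := by positivity
  set δ := min ε (min (1 / (16 * ((‖b‖ + 1) * (M + 1)))) (κ * ε / (4 * (‖w‖ * ‖v‖ + 1)))) with hδ
  have hδ0 : 0 < δ := by positivity
  have hδ1 : δ ≤ ε := min_le_left _ _
  have hδ2 : 2 * δ * ‖b‖ * M ≤ 1/8 := by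
    have h1 : δ ≤ 1 / (16 * ((‖b‖ + 1) * (M + 1))) := (min_le_right _ _).trans (min_le_left _ _)
    rw [le_div_iff₀ (by positivity)] at h1
    have h2 : ‖b‖ * M ≤ (‖b‖ + 1) * (M + 1) := by gcongr <;> linarith
    nlinarith
  have hδ3 : 2 * δ * (‖w‖ * ‖v‖) ≤ κ * (ε / 2) := by
    have h1 : δ ≤ κ * ε / (4 * (‖w‖ * ‖v‖ + 1)) := (min_le_right _ _).trans (min_le_right _ _)
    rw [le_div_iff₀ (by positivity)] at h1
    nlinarith
  clear_value δ
  obtain ⟨p, hpB, hp, hp0, E, hEB, hEfd, hpE, hEu, hcomm, hEapp, hcz⟩ :=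
    hTR δ hδ0 (insert v (G ∪ Finset.univ.image r)) (by
      intro x hx
      simp only [Finset.coe_insert, Finset.coe_union, Finset.coe_image, Set.mem_insert_iff,
        Set.mem_union, Set.mem_image] at hx
      rcases hx with rfl | hx | ⟨i, _, rfl⟩
      · exact hvB
      · exact hG hx
      · exact hrB i) y hyB hy hy0
  refine ⟨p, hpB, hp, hp0, E, hEB, hEfd, hpE, hEu, ?_, ?_, hcz, ?_⟩
  · intro x hx; exact (hcomm x (by simp [hx])).trans_le hδ1
  · intro x hx
    obtain ⟨d, hd, h⟩ := hEapp x (by simp [hx])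
    exact ⟨d, hd, h.trans_le hδ1⟩
  have hps : star p = p := hp.1.symm
  have hpp : p * p = p := hp.2.symm
  have hpn : ‖p‖ = 1 := norm_proj_eq hp hp0
  have hpn' : ‖p‖ ≤ 1 := hpn.le
  have hcv : ‖p * v - v * p‖ ≤ δ := (hcomm v (by simp)).le
  have hcr : ∀ i, ‖p * r i - r i * p‖ ≤ δ := fun i => (hcomm (r i) (by simp)).le
  -- lower bound for `p b p`
  have hβ : κ ≤ ‖p * b * p‖ := by
    have h1 := star_left_conjugate_le_conjugate hr p
    rw [hps] at h1
    have e1 : p * algebraMap ℝ A (1/4) * p = (1/4 : ℝ) • p := by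
      rw [Algebra.algebraMap_eq_smul_one, mul_smul_comm, smul_mul_assoc, mul_one, hpp]
    have hpnn : 0 ≤ p := by
      have := star_mul_self_nonneg p
      rwa [hps, hpp] at this
    rw [e1] at h1
    have h2 := CStarAlgebra.norm_le_norm_of_nonneg_of_le (smul_nonneg (by norm_num) hpnn) h1
    rw [norm_smul, hpn, Finset.mul_sum, Finset.sum_mul] at h2
    have h3 : ∀ i, ‖p * (r i * b * star (r i)) * p‖ ≤
        ‖r i‖ * ‖r i‖ * ‖p * b * p‖ + 2 * δ * ‖b‖ * ‖r i‖ := by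
      intro i
      have hcr' : ‖star (r i) * p - p * star (r i)‖ ≤ δ := by
        have := hcr i
        rw [← norm_star, star_sub, star_mul, star_mul, hps] at this
        exact this
      have e : p * (r i * b * star (r i)) * p = r i * (p * b * p) * star (r i)
          + ((p * r i - r i * p) * (b * star (r i) * p)
            + r i * p * b * (star (r i) * p - p * star (r i))) := by
        noncomm_ring
      rw [e]
      have n1 : ‖r i * (p * b * p) * star (r i)‖ ≤ ‖r i‖ * ‖r i‖ * ‖p * b * p‖ := by
        refine norm_mul₃_le.trans ?_
        rw [norm_star]; apply le_of_eq; ring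
      have n2 : ‖(p * r i - r i * p) * (b * star (r i) * p)‖ ≤ δ * (‖b‖ * ‖r i‖) := by
        refine (norm_mul_le _ _).trans ?_
        gcongr
        · exact hcr i
        · refine (norm_mul_le_of_le_one_right hpn').trans ?_
          refine (norm_mul_le _ _).trans ?_
          rw [norm_star]
      have n3 : ‖r i * p * b * (star (r i) * p - p * star (r i))‖ ≤ (‖r i‖ * ‖b‖) * δ := by
        refine (norm_mul_le _ _).trans ?_
        gcongr
        refine (norm_mul_le _ _).trans ?_
        gcongr
        exact norm_mul_le_of_le_one_right hpn'
      refine (norm_add_le _ _).trans ?_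
      have := norm_add_le ((p * r i - r i * p) * (b * star (r i) * p))
        (r i * p * b * (star (r i) * p - p * star (r i)))
      nlinarith
    have h4 : ‖∑ i, p * (r i * b * star (r i)) * p‖ ≤ K * ‖p * b * p‖ + 2 * δ * ‖b‖ * M := by
      refine (norm_sum_le _ _).trans ((Finset.sum_le_sum fun i _ => h3 i).trans ?_)
      rw [Finset.sum_add_distrib, ← Finset.sum_mul, ← Finset.mul_sum]
    have h5 : (1/8 : ℝ) ≤ K * ‖p * b * p‖ := by
      have : ‖(1/4 : ℝ)‖ = 1/4 := by norm_num
      rw [this] at h2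
      linarith
    rw [hκ, div_le_iff₀ (by positivity)]
    nlinarith [norm_nonneg (p * b * p)]
  set β := ‖p * b * p‖ with hβd
  have hvp : ‖v * p‖ * ‖v * p‖ = β := by
    rw [← CStarRing.norm_star_mul_self, star_mul, hvsa, hps, hβd, hb]
    congr 1; noncomm_ring
  have hpv : ‖p * v‖ = ‖v * p‖ := by
    rw [← norm_star, star_mul, hvsa, hps]
  rcases le_total (‖w‖ - ε/2) 0 with hL | hL
  · linarith [norm_nonneg (p * w * p)]
  have h1 := star_left_conjugate_le_conjugate hvwv p
  rw [hps, mul_smul_comm, smul_mul_assoc] at h1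
  have hpbp : 0 ≤ p * b * p := by
    have := star_left_conjugate_nonneg hb0 p
    rwa [hps] at this
  have h2 := CStarAlgebra.norm_le_norm_of_nonneg_of_le (smul_nonneg hL hpbp) h1
  rw [norm_smul, Real.norm_of_nonneg hL] at h2
  have e : p * (v * w * v) * p = (p * v) * (p * w * p) * (v * p)
      + (p * ((p * v - v * p) * (w * (v * p))) - p * v * p * w * ((p * v - v * p) * p)) := by
    have e1 : p * ((p * v - v * p) * (w * (v * p))) = (p * p) * v * w * v * p - p * v * p * w * v * p := by
      noncomm_ring
    have e2 : p * v * p * w * ((p * v - v * p) * p) = p * v * p * w * p * v * p - p * v * p * w * v * (p * p) := by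
      noncomm_ring
    rw [e1, e2, hpp]; noncomm_ring
  have n1 : ‖(p * v) * (p * w * p) * (v * p)‖ ≤ ‖p * w * p‖ * β := by
    refine norm_mul₃_le.trans ?_
    rw [hpv, ← hvp]; apply le_of_eq; ring
  have n2 : ‖p * ((p * v - v * p) * (w * (v * p)))‖ ≤ δ * (‖w‖ * ‖v‖) := by
    refine (norm_mul_le_of_le_one_left hpn').trans ((norm_mul_le _ _).trans ?_)
    gcongr
    refine (norm_mul_le _ _).trans ?_
    gcongr
    exact norm_mul_le_of_le_one_right hpn'
  have n3 : ‖p * v * p * w * ((p * v - v * p) * p)‖ ≤ (‖v‖ * ‖w‖) * δ := by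
    refine (norm_mul_le _ _).trans ?_
    gcongr
    · refine (norm_mul_le _ _).trans ?_
      gcongr
      exact (norm_mul_le_of_le_one_right hpn').trans (norm_mul_le_of_le_one_left hpn')
    · exact (norm_mul_le_of_le_one_right hpn').trans hcv
  have h3 : ‖p * (v * w * v) * p‖ ≤ ‖p * w * p‖ * β + 2 * δ * (‖w‖ * ‖v‖) := by
    rw [e]
    refine (norm_add_le _ _).trans ?_
    have := norm_sub_le (p * ((p * v - v * p) * (w * (v * p)))) (p * v * p * w * ((p * v - v * p) * p))
    nlinarith
  have h4 : (‖w‖ - ε/2) * β ≤ ‖p * w * p‖ * β + β * (ε/2) := by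
    have : κ * (ε/2) ≤ β * (ε/2) := by gcongr
    linarith
  have hβ0 : 0 < β := hκ0.trans_le hβ
  by_contra hcon
  push Not at hcon
  nlinarith

theorem exists_in_B {B : StarSubalgebra ℂ A}
    (hBc : IsClosed (B : Set A)) (hlarge : IsCentrallyLarge B)
    {a : A} (ha : 0 ≤ a) (ha0 : a ≠ 0) : ∃ y ∈ B, 0 ≤ y ∧ y ≠ 0 ∧ Cz y a := by
  have hnt : Nontrivial A := ⟨a, 0, ha0⟩
  have hna : 0 < ‖a‖ := norm_pos_iff.mpr ha0
  set x := ‖a‖⁻¹ • a with hx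
  have hx0 : 0 ≤ x := smul_nonneg (by positivity) ha
  have hxn : ‖x‖ = 1 := by rw [hx, norm_smul, norm_inv, norm_norm]; field_simp
  have hxa : Cz x a := cz_smul (by positivity)
  clear_value x
  set s := CFC.sqrt x with hs
  have hss : s * s = x := CFC.sqrt_mul_sqrt_self x hx0
  have hssa : star s = s := (IsSelfAdjoint.of_nonneg (CFC.sqrt_nonneg x)).star_eq
  clear_value s
  have hsn : ‖s‖ ≤ 1 := by
    have := CStarRing.norm_star_mul_self (x := s)
    rw [hssa, hss, hxn] at this
    nlinarith [norm_nonneg s]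
  obtain ⟨c, g, hgB, hg0, hg1, hc, hcB, -, -, hn, -⟩ := hlarge 1 (fun _ => s) (1/8) (by norm_num)
    x hx0 hxn 1 (one_mem B) zero_le_one one_ne_zero
  have hgsa : IsSelfAdjoint g := .of_nonneg hg0
  have hksa : star (1 - g) = 1 - g := by rw [star_sub, star_one, hgsa.star_eq]
  have hkn := norm_one_sub_le hg0 hg1
  set k := 1 - g with hk
  clear_value k
  set w := k * c 0 * star (c 0) * k with hw
  have hw' : w = (k * c 0) * star (k * c 0) := by rw [star_mul, hksa, hw]; noncomm_ring
  have hwB : w ∈ B := by rw [hw']; exact mul_mem (hcB 0) (star_mem (hcB 0))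
  have hw0 : 0 ≤ w := by rw [hw']; exact mul_star_self_nonneg _
  have hcl := sq_close hkn hsn (by norm_num) (hc 0).le
  rw [hssa, hss, ← hw] at hcl
  clear_value w
  have hwsa : IsSelfAdjoint w := .of_nonneg hw0
  have hkxk : k * x * k = k * x * star k := by rw [hksa]
  have hxsa : IsSelfAdjoint x := .of_nonneg hx0
  have hksx : IsSelfAdjoint (k * x * k) := by rw [hkxk]; exact hxsa.conjugate k
  refine ⟨cfc (fun t : ℝ => max (t - 3 * (1/8)) 0) w, cfc_mem (𝕜' := ℂ) (hs := hBc) _ hwB,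
    cfc_nonneg fun t _ => le_max_right _ _, ?_, ?_⟩
  · intro h
    have h1 := norm_apply_le_norm_cfc (fun t : ℝ => max (t - 3 * (1/8)) 0) w
      (CStarAlgebra.norm_mem_spectrum_of_nonneg hw0) (by fun_prop)
    rw [h, norm_zero] at h1
    have h2 := norm_le_zero_iff.mp h1
    have h3 : ‖w‖ - 3 * (1/8) ≤ max (‖w‖ - 3 * (1/8)) 0 := le_max_left _ _
    rw [h2] at h3
    have h4 := norm_sub_norm_le (k * x * k) w
    rw [norm_sub_rev] at h4
    linarith
  · refine cz_trans (cz_cut hwsa ?_) (cz_trans (cz_conj k x) hxa)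
    rw [← hkxk]
    have := (abs_le_of_norm (hwsa.sub hksx) hcl).1
    rwa [sub_le_iff_le_add'] at this

theorem large_finset {B : StarSubalgebra ℂ A} (hlarge : IsCentrallyLarge B)
    (F : Finset A) {ε : ℝ} (hε : 0 < ε) {x : A} (hx : 0 ≤ x) (hxn : ‖x‖ = 1)
    {y : A} (hyB : y ∈ B) (hy : 0 ≤ y) (hy0 : y ≠ 0) :
    ∃ c : A → A, ∃ g ∈ B, 0 ≤ g ∧ g ≤ 1 ∧ (∀ z ∈ F, ‖c z - z‖ < ε) ∧
      (∀ z ∈ F, (1 - g) * c z ∈ B) ∧ Cz g y ∧ ‖(1 - g) * x * (1 - g)‖ > 1 - ε ∧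
      (∀ z ∈ F, ‖g * z - z * g‖ < ε) := by
  classical
  obtain ⟨c, g, hgB, hg0, hg1, hc, hcB, hgy, -, hn, hcomm⟩ :=
    hlarge F.card (fun j => (F.equivFin.symm j : A)) ε hε x hx hxn y hyB hy hy0
  refine ⟨fun z => if h : z ∈ F then c (F.equivFin ⟨z, h⟩) else 0, g, hgB, hg0, hg1, ?_, ?_,
    czIn_cz hgy, hn, ?_⟩
  · intro z hz
    have := hc (F.equivFin ⟨z, hz⟩)
    simpa [hz] using this
  · intro z hz
    have := hcB (F.equivFin ⟨z, hz⟩)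
    simpa [hz] using this
  · intro z hz
    have := hcomm (F.equivFin ⟨z, hz⟩)
    simpa [hz] using this

end LargeHelpers

section MainHelpers
variable {A : Type*} [CStarAlgebra A] [PartialOrder A] [StarOrderedRing A]

theorem exists_cut (E : NonUnitalStarSubalgebra ℂ A) (hE : FiniteDimensional ℂ E)
    {X d : A} (hX : 0 ≤ X) (hX1 : ‖X‖ ≤ 1) {δ : ℝ} (hδ : 0 < δ) (hd : d ∈ E) (hXd : ‖X - d‖ ≤ δ) :
    ∃ g ∈ E, 0 ≤ g ∧ g ≤ 1 ∧ ‖g - X‖ ≤ 2 * δ ∧ Cz g X := by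
  have hEc : IsClosed (E : Set A) := by
    have : FiniteDimensional ℂ E.toSubmodule := hE
    exact Submodule.closed_of_finiteDimensional E.toSubmodule
  have hXsa : IsSelfAdjoint X := .of_nonneg hX
  set h := (1/2 : ℂ) • (d + star d) with hh
  have hhE : h ∈ E := SMulMemClass.smul_mem _ (add_mem hd (star_mem hd))
  have hhsa : IsSelfAdjoint h := by
    rw [isSelfAdjoint_iff, hh, star_smul, star_add, star_star, add_comm]
    simp
  have hn : ‖h - X‖ ≤ δ := by
    have e : h - X = - ((1/2 : ℂ) • ((X - d) + star (X - d))) := by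
      rw [star_sub, hXsa.star_eq, hh]
      module
    rw [e, norm_neg, norm_smul]
    have h1 := norm_add_le (X - d) (star (X - d))
    rw [norm_star] at h1
    have h2 : ‖(1/2 : ℂ)‖ = 1/2 := by norm_num
    rw [h2]; linarith
  clear_value h
  obtain ⟨hle, hge⟩ := abs_le_of_norm (hhsa.sub hXsa) hn
  rw [sub_le_iff_le_add'] at hle
  have hsp1 : ∀ t ∈ spectrum ℝ h, t ≤ 1 + δ := by
    rw [← le_algebraMap_iff_spectrum_le (ha := hhsa)]
    refine hle.trans ?_
    rw [map_add]
    gcongr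
    exact (abs_le_of_norm hXsa hX1).1
  have hsp2 : ∀ t ∈ spectrum ℝ h, -δ ≤ t := by
    rw [← algebraMap_le_iff_le_spectrum (ha := hhsa), map_neg]
    exact hge.trans (sub_le_self _ hX)
  let f : ℝ → ℝ := fun t => min (max (t - δ) 0) 1
  have hf : Continuous f := by fun_prop
  have hf0 : f 0 = 0 := by
    simp only [f]
    rw [max_eq_right (by linarith)]; simp
  have hid : cfc (fun t : ℝ => t) h = h := cfc_id' ℝ h
  have hfp : ∀ t, 0 ≤ f t := fun t => le_min (le_max_right _ _) zero_le_one
  refine ⟨cfc f h, ?_, cfc_nonneg fun t _ => hfp t, cfc_le_one _ _ fun t _ => min_le_right _ _, ?_, ?_⟩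
  · rw [← cfcₙ_eq_cfc (hf := hf.continuousOn) (hf0 := hf0)]
    exact cfcₙ_mem (𝕜' := ℂ) (hs := hEc) f hhE
  · have h1 : ‖cfc f h - h‖ ≤ δ := by
      have : cfc f h - h = cfc (fun t => f t - t) h := by
        rw [cfc_sub _ _ _ (by fun_prop) (by fun_prop), hid]
      rw [this]
      refine norm_cfc_le hδ.le fun t ht => ?_
      have h1 := hsp1 t ht
      have h2 := hsp2 t ht
      simp only [f]
      rw [Real.norm_eq_abs, abs_le]
      rcases le_total (t - δ) 0 with h | h
      · rw [max_eq_right h, min_eq_left zero_le_one]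
        constructor <;> linarith
      · rw [max_eq_left h, min_eq_left (by linarith)]
        constructor <;> linarith
    have := norm_add_le (cfc f h - h) (h - X)
    rw [sub_add_sub_cancel] at this
    linarith
  · refine cz_trans (cz_of_le (cfc_nonneg fun t _ => hfp t) ?_) (cz_cut (δ := δ) hhsa hle)
    exact cfc_mono (fun t _ => min_le_left _ _) (by fun_prop) (by fun_prop)

set_option maxHeartbeats 2000000 in
theorem main_norm_one
    (hsimple : IsSimpleCStarAlgebra A)
    (hinfdim : ¬ FiniteDimensional ℂ A)
    (B : StarSubalgebra ℂ A) (hBclosed : IsClosed (B : Set A))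
    (hlarge : IsCentrallyLarge B)
    (hTR : TracialTopRankZeroIn B)
    (ε : ℝ) (hε : 0 < ε) (F : Finset A) (a : A) (ha : 0 ≤ a) (han : ‖a‖ = 1) :
    ∃ p g : A, ∃ D : NonUnitalStarSubalgebra ℂ A,
      FiniteDimensional ℂ D ∧ IsProjection p ∧ p ∈ D ∧ g ∈ D ∧
      0 ≤ g ∧ g ≤ 1 ∧ (∀ z ∈ D, p * z = z ∧ z * p = z) ∧
      (∀ x ∈ F, (∃ d ∈ D, ‖(p - g) * x - d‖ < ε) ∧
                (∃ d ∈ D, ‖x * (p - g) - d‖ < ε)) ∧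
      (∀ x ∈ F, ‖(p - g) * x - x * (p - g)‖ < ε) ∧
      Cz (1 - (p - g)) a ∧
      ‖(p - g) * a * (p - g)‖ ≥ 1 - ε := by
  classical
  have ha0 : a ≠ 0 := by rw [← norm_pos_iff, han]; norm_num
  set s := CFC.sqrt a with hs
  have hss : s * s = a := CFC.sqrt_mul_sqrt_self a ha
  have hssa : star s = s := (IsSelfAdjoint.of_nonneg (CFC.sqrt_nonneg a)).star_eq
  clear_value s
  have hsn : ‖s‖ ≤ 1 := by
    have := CStarRing.norm_star_mul_self (x := s)
    rw [hssa, hss, han] at this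
    nlinarith [norm_nonneg s]
  obtain ⟨a₁, a₂, ha₁, ha₂, hne₁, hne₂, hort, hcza⟩ := exists_orthogonal hsimple hinfdim ha ha0
  obtain ⟨y₁, hy₁B, hy₁, hy₁0, hy₁a⟩ := exists_in_B hBclosed hlarge ha₁ hne₁
  obtain ⟨y₂, hy₂B, hy₂, hy₂0, hy₂a⟩ := exists_in_B hBclosed hlarge ha₂ hne₂
  set C := 1 + ∑ x ∈ F, ‖x‖ with hC
  have hC1 : 1 ≤ C := by
    have : 0 ≤ ∑ x ∈ F, ‖x‖ := Finset.sum_nonneg fun i _ => norm_nonneg _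
    linarith
  have hCx : ∀ x ∈ F, ‖x‖ ≤ C := by
    intro x hx
    have := Finset.single_le_sum (f := fun x : A => ‖x‖) (fun i _ => norm_nonneg _) hx
    linarith
  clear_value C
  set δ := min 1 (ε / (32 * C)) with hδ
  have hδ0 : 0 < δ := by positivity
  have hδ1 : δ ≤ 1 := min_le_left _ _
  have hδ2 : 32 * (C * δ) ≤ ε := by
    have : δ ≤ ε / (32 * C) := min_le_right _ _
    rw [le_div_iff₀ (by positivity)] at this
    linarith
  clear_value δ
  have hδ3 : δ ≤ C * δ := le_mul_of_one_le_left hδ0.le hC1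
  obtain ⟨c, g₁, hg₁B, hg₁0, hg₁1, hc, hcB, hg₁y, hn, hcomm⟩ :=
    large_finset hlarge (insert s F) hδ0 ha han hy₁B hy₁ hy₁0
  have hg₁sa : star g₁ = g₁ := (IsSelfAdjoint.of_nonneg hg₁0).star_eq
  have hksa : star (1 - g₁) = 1 - g₁ := by rw [star_sub, star_one, hg₁sa]
  have hkn := norm_one_sub_le hg₁0 hg₁1
  obtain ⟨k, hk⟩ : ∃ k, k = 1 - g₁ := ⟨_, rfl⟩
  rw [← hk] at hkn hksa hn
  simp_rw [← hk] at hcB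
  set w := k * c s * star (c s) * k with hw
  have hw' : w = (k * c s) * star (k * c s) := by rw [star_mul, hksa, hw]; noncomm_ring
  have hwB : w ∈ B := by
    rw [hw']; exact mul_mem (hcB s (by simp)) (star_mem (hcB s (by simp)))
  have hw0 : 0 ≤ w := by rw [hw']; exact mul_star_self_nonneg _
  have hcl := sq_close hkn hsn hδ1 (hc s (by simp)).le
  rw [hssa, hss, ← hw] at hcl
  clear_value w
  obtain ⟨p, hpB, hp, hp0, E, hEB, hEfd, hpE, hEu, hpc, hEapp, hcz, hpw⟩ :=
    tr_norm hsimple hBclosed hlarge hTR hδ0 (insert g₁ (F.image fun x => k * c x)) (by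
      intro x hx
      simp only [Finset.coe_insert, Finset.coe_image, Set.mem_insert_iff, Set.mem_image] at hx
      rcases hx with rfl | ⟨z, hz, rfl⟩
      · exact hg₁B
      · exact hcB z (by simp only [Finset.mem_insert]; right; exact hz)) hwB hw0 hy₂B hy₂ hy₂0
  have hps : star p = p := hp.1.symm
  have hpp : p * p = p := hp.2.symm
  have hpn : ‖p‖ ≤ 1 := norm_proj_le hp
  obtain ⟨d, hdE, hd⟩ := hEapp g₁ (by simp)
  have hX0 : 0 ≤ p * g₁ * p := by
    have := star_left_conjugate_nonneg hg₁0 p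
    rwa [hps] at this
  have hg₁n : ‖g₁‖ ≤ 1 := (CStarAlgebra.norm_le_one_iff_of_nonneg _ hg₁0).mpr hg₁1
  have hXn : ‖p * g₁ * p‖ ≤ 1 :=
    (norm_mul_le_of_le_one_right hpn).trans ((norm_mul_le_of_le_one_left hpn).trans hg₁n)
  obtain ⟨g, hgE, hg0, hg1, hgX, hgcz⟩ := exists_cut E hEfd hX0 hXn hδ0 hdE hd.le
  have hgp : p * g = g := (hEu g hgE).1
  have hgp' : g * p = g := (hEu g hgE).2
  -- `q = p - g` is close to `p k` and `k p`
  have hpk : ‖p * g₁ - g₁ * p‖ ≤ δ := (hpc g₁ (by simp)).le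
  have hq1 : ‖(p - g) - p * k‖ ≤ 3 * δ := by
    have e : (p - g) - p * k = - (g - p * g₁ * p) + p * (p * g₁ - g₁ * p) := by
      rw [hk]
      have : p * (p * g₁ - g₁ * p) = (p * p) * g₁ - p * g₁ * p := by noncomm_ring
      rw [this, hpp]; noncomm_ring
    rw [e]
    refine (norm_add_le _ _).trans ?_
    rw [norm_neg]
    have := norm_mul_le_of_le_one_left (y := p * g₁ - g₁ * p) hpn
    linarith
  have hq2 : ‖(p - g) - k * p‖ ≤ 3 * δ := by
    have e : (p - g) - k * p = - (g - p * g₁ * p) - (p * g₁ - g₁ * p) * p := by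
      rw [hk]
      have : (p * g₁ - g₁ * p) * p = p * g₁ * p - g₁ * (p * p) := by noncomm_ring
      rw [this, hpp]; noncomm_ring
    rw [e]
    refine (norm_sub_le _ _).trans ?_
    rw [norm_neg]
    have := norm_mul_le_of_le_one_right (y := p * g₁ - g₁ * p) hpn
    linarith
  have hqn : ‖p - g‖ ≤ 1 := by
    have e : p - g = p * (1 - g) := by rw [mul_sub, mul_one, hgp]
    rw [e]
    exact (norm_mul_le_of_le_one_left hpn).trans (norm_one_sub_le hg0 hg1)
  obtain ⟨q, hq⟩ : ∃ q, q = p - g := ⟨_, rfl⟩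
  have hest : ∀ x ∈ F, ∃ d ∈ E, ‖q * x - d‖ ≤ 6 * (C * δ) ∧ ‖x * q - d‖ ≤ 7 * (C * δ) := by
    intro x hx
    have hxC := hCx x hx
    obtain ⟨d, hdE, hd⟩ := hEapp (k * c x) (by
      simp only [Finset.mem_insert, Finset.mem_image]; right; exact ⟨x, hx, rfl⟩)
    have hpx : ‖p * (k * c x) - (k * c x) * p‖ ≤ δ := (hpc (k * c x) (by
      simp only [Finset.mem_insert, Finset.mem_image]; right; exact ⟨x, hx, rfl⟩)).le
    have hcx : ‖c x - x‖ ≤ δ := (hc x (by simp [hx])).le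
    have hgx : ‖g₁ * x - x * g₁‖ ≤ δ := (hcomm x (by simp [hx])).le
    refine ⟨d, hdE, ?_, ?_⟩
    · have e : q * x - d = ((p - g) - p * k) * x - p * (k * (c x - x))
          + p * (p * (k * c x) - (k * c x) * p) + (p * (k * c x) * p - d) := by
        have : p * (p * (k * c x) - (k * c x) * p) = (p * p) * (k * c x) - p * (k * c x) * p := by
          noncomm_ring
        rw [this, hpp, hq]; noncomm_ring
      have n1 : ‖((p - g) - p * k) * x‖ ≤ 3 * δ * C := (norm_mul_le _ _).trans (by gcongr)
      have n2 : ‖p * (k * (c x - x))‖ ≤ δ :=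
        (norm_mul_le_of_le_one_left hpn).trans ((norm_mul_le_of_le_one_left hkn).trans hcx)
      have n3 : ‖p * (p * (k * c x) - (k * c x) * p)‖ ≤ δ :=
        (norm_mul_le_of_le_one_left hpn).trans hpx
      rw [e]
      refine (norm_add₃_le).trans ?_
      have := norm_sub_le (((p - g) - p * k) * x) (p * (k * (c x - x)))
      linarith
    · have e : x * q - d = x * ((p - g) - k * p) + (g₁ * x - x * g₁) * p - (k * (c x - x)) * p
          - (p * (k * c x) - (k * c x) * p) * p + (p * (k * c x) * p - d) := by
        have : (p * (k * c x) - (k * c x) * p) * p = p * (k * c x) * p - (k * c x) * (p * p) := by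
          noncomm_ring
        rw [this, hpp, hq, hk]; noncomm_ring
      have n1 : ‖x * ((p - g) - k * p)‖ ≤ C * (3 * δ) := (norm_mul_le _ _).trans (by gcongr)
      have n2 : ‖(k * (c x - x)) * p‖ ≤ δ :=
        (norm_mul_le_of_le_one_right hpn).trans ((norm_mul_le_of_le_one_left hkn).trans hcx)
      have n3 : ‖(p * (k * c x) - (k * c x) * p) * p‖ ≤ δ :=
        (norm_mul_le_of_le_one_right hpn).trans hpx
      have n4 : ‖(g₁ * x - x * g₁) * p‖ ≤ δ := (norm_mul_le_of_le_one_right hpn).trans hgx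
      rw [e]
      refine (norm_add_le _ _).trans ?_
      have t1 := norm_sub_le (x * ((p - g) - k * p) + (g₁ * x - x * g₁) * p - (k * (c x - x)) * p)
        ((p * (k * c x) - (k * c x) * p) * p)
      have t2 := norm_sub_le (x * ((p - g) - k * p) + (g₁ * x - x * g₁) * p) ((k * (c x - x)) * p)
      have t3 := norm_add_le (x * ((p - g) - k * p)) ((g₁ * x - x * g₁) * p)
      linarith
  have hCδ : 0 < C * δ := by positivity
  refine ⟨p, g, E, hEfd, hp, hpE, hgE, hg0, hg1, hEu, ?_, ?_, ?_, ?_⟩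
  · intro x hx
    obtain ⟨d, hdE, h1, h2⟩ := hest x hx
    rw [← hq]
    exact ⟨⟨d, hdE, by linarith⟩, ⟨d, hdE, by linarith⟩⟩
  · intro x hx
    obtain ⟨d, hdE, h1, h2⟩ := hest x hx
    rw [← hq]
    have := norm_sub_le (q * x - d) (x * q - d)
    rw [sub_sub_sub_cancel_right] at this
    linarith
  · have e : 1 - (p - g) = g + (1 - p) := by abel
    rw [e]
    refine cz_trans (cz_add ?_ ?_ ha₁ ha₂ hort) hcza
    · have h1 : Cz (p * g₁ * p) g₁ := by
        have := cz_conj p g₁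
        rwa [hps] at this
      exact cz_trans hgcz (cz_trans h1 (cz_trans hg₁y hy₁a))
    · exact cz_trans (czIn_cz hcz) hy₂a
  · rw [← hq] at hq1 hq2 hqn ⊢
    have e : p * w * p = q * a * q - (q - p * k) * a * q - (p * k) * a * (q - k * p)
        + p * (w - k * a * k) * p := by noncomm_ring
    have hpkn : ‖p * k‖ ≤ 1 := (norm_mul_le_of_le_one_left hpn).trans hkn
    have n1 : ‖(q - p * k) * a * q‖ ≤ 3 * δ :=
      (norm_mul_le_of_le_one_right hqn).trans ((norm_mul_le_of_le_one_right han.le).trans hq1)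
    have n2 : ‖(p * k) * a * (q - k * p)‖ ≤ 3 * δ := by
      rw [mul_assoc]
      exact (norm_mul_le_of_le_one_left hpkn).trans ((norm_mul_le_of_le_one_left han.le).trans hq2)
    have n3 : ‖p * (w - k * a * k) * p‖ ≤ 3 * δ :=
      (norm_mul_le_of_le_one_right hpn).trans ((norm_mul_le_of_le_one_left hpn).trans hcl)
    have t0 := norm_add_le (q * a * q - (q - p * k) * a * q - (p * k) * a * (q - k * p))
      (p * (w - k * a * k) * p)
    rw [← e] at t0
    have t1 := norm_sub_le (q * a * q - (q - p * k) * a * q) ((p * k) * a * (q - k * p))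
    have t2 := norm_sub_le (q * a * q) ((q - p * k) * a * q)
    have t3 := norm_sub_norm_le (k * a * k) w
    rw [norm_sub_rev] at t3
    linarith

end MainHelpers

/-- **Theorem 3.1.** Let `A` be an infinite-dimensional unital simple
C*-algebra and let `B ⊆ A` be a centrally large subalgebra with tracial
topological rank zero.  Then `A` belongs to `WTA 𝔽`, where `𝔽` is the class of
finite-dimensional C*-algebras. -/
theorem wta_of_centrallyLarge_trZero
    {A : Type*} [CStarAlgebra A] [PartialOrder A] [StarOrderedRing A]
    (hsimple : IsSimpleCStarAlgebra A)
    (hinfdim : ¬ FiniteDimensional ℂ A)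
    (B : StarSubalgebra ℂ A) (hBclosed : IsClosed (B : Set A))
    (hlarge : IsCentrallyLarge B)
    (hTR : TracialTopRankZeroIn B) :
    ∀ (ε : ℝ), 0 < ε → ∀ F : Finset A, ∀ a : A, 0 ≤ a → a ≠ 0 →
    ∃ p g : A, ∃ D : NonUnitalStarSubalgebra ℂ A,
      FiniteDimensional ℂ D ∧ IsProjection p ∧ p ∈ D ∧ g ∈ D ∧
      0 ≤ g ∧ g ≤ 1 ∧ (∀ z ∈ D, p * z = z ∧ z * p = z) ∧
      (∀ x ∈ F, (∃ d ∈ D, ‖(p - g) * x - d‖ < ε) ∧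
                (∃ d ∈ D, ‖x * (p - g) - d‖ < ε)) ∧
      (∀ x ∈ F, ‖(p - g) * x - x * (p - g)‖ < ε) ∧
      CuntzSubeq (1 - (p - g)) a ∧
      ‖(p - g) * a * (p - g)‖ ≥ ‖a‖ - ε := by
  intro ε hε F a ha ha0
  have hna : 0 < ‖a‖ := norm_pos_iff.mpr ha0
  obtain ⟨p, g, D, h1, h2, h3, h4, h5, h6, h7, h8, h9, h10, h11⟩ :=
    main_norm_one hsimple hinfdim B hBclosed hlarge hTR (min ε (ε / ‖a‖)) (by positivity) F
      (‖a‖⁻¹ • a) (smul_nonneg (by positivity) ha)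
      (by rw [norm_smul, norm_inv, norm_norm]; field_simp)
  have hm : min ε (ε / ‖a‖) ≤ ε := min_le_left _ _
  refine ⟨p, g, D, h1, h2, h3, h4, h5, h6, h7, ?_, ?_, ?_, ?_⟩
  · intro x hx
    obtain ⟨⟨d, hd, e1⟩, ⟨d', hd', e2⟩⟩ := h8 x hx
    exact ⟨⟨d, hd, e1.trans_le hm⟩, ⟨d', hd', e2.trans_le hm⟩⟩
  · intro x hx; exact (h9 x hx).trans_le hm
  · exact cz_iff.mpr (cz_trans h10 (cz_smul (by positivity)))
  · have hm2 : min ε (ε / ‖a‖) ≤ ε / ‖a‖ := min_le_right _ _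
    rw [mul_smul_comm, smul_mul_assoc, norm_smul, norm_inv, norm_norm] at h11
    have h12 : 1 - ε / ‖a‖ ≤ ‖a‖⁻¹ * ‖(p - g) * a * (p - g)‖ := by linarith
    have h13 := mul_le_mul_of_nonneg_left h12 hna.le
    rw [mul_sub, mul_div_cancel₀ _ hna.ne', mul_inv_cancel_left₀ hna.ne', mul_one] at h13
    exact h13
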